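/- Let η ∈ {1,2} and let q, r, s be primes with q ≡ 3 (mod 4), r ≡ s ≡ 5 (mod 8), Legendre symbols (q/r) = (q/s) = (−1)^{δ_{η,2}} and (r/s) = 1. Let ρ be the element of {1,2} with ρ ≠ η and let (x, y) be the fundamental solution of the Pell equation X² − ρqrs·Y² = 1. Then exactly one of the two natural numbers 2^{δ_{ρ,2}}·q·(x+1) and 2^{δ_{ρ,2}}·q·(x−1) is a perfect square, and there exist integers y₁, y₂ with y = y₁y₂, 2x = ρq·y₁² + rs·y₂² (equivalently √(2·ε_{ρqrs}) = y₁√(ρq) + y₂√(rs)), and moreover 2 = ρq·y₁² − rs·y₂² if 2^{δ_{ρ,2}}·q·(x+1) is a perfect square, while 2 = −ρq·y₁² + rs·y₂² if 2^{δ_{ρ,2}}·q·(x−1) is a perfect square. -/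

import Mathlib

/-!
Factor `x² - 1 = d y²` with `d = ρqrs`: dividing `x + 1` and `x - 1` by their gcd `k ∈ {1, 2}`
leaves coprime numbers `a u²` and `b v²` with `a b = d` and `a u² - b v² = c`, where `c = 2 / k`.
If `r` divided one of `a`, `b` and `s` the other, say `a = a' r` and `b = b' s`, this equation would
give `(b'/r) = (c/r)` and `(a'/s) = (c/s)`. Every divisor of `ρq` has the same symbol modulo `r` and
`s`, and so has `c`, so the product would be `(ρq/r) = 1`, whereas `(ρq/r) = -1`. Hence `rs` divides
one of `a`, `b`; the other divides `ρq` and has the symbol of `c` modulo `r`, which makes it `1` or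
`q`. It is not `1`: `a = 1` would make `x + y √d` a square, and `b = 1` would make `-1` a square
modulo `q`. So it is `q`, and then `k = ρ`.
-/

open Pell

section CoprimeFactors

theorem exists_eq_mul_or_exists_eq_mul_of_prime {M : Type*} [CommMonoidWithZero M]
    [IsCancelMulZero M] {p a b n : M} (hp : Prime p) (h : a * b = n * p) :
    (∃ a', a = a' * p ∧ a' * b = n) ∨ ∃ b', b = b' * p ∧ a * b' = n := by
  rcases hp.dvd_or_dvd (Dvd.intro_left n h.symm) with ⟨c, rfl⟩ | ⟨c, rfl⟩
  · exact .inl ⟨c, mul_comm _ _, mul_right_cancel₀ hp.ne_zero (by rw [← h]; ac_rfl)⟩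
  · exact .inr ⟨c, mul_comm _ _, mul_right_cancel₀ hp.ne_zero (by rw [← h]; ac_rfl)⟩

theorem exists_eq_mul_pow_of_coprime {X Z d y n : ℕ} (hd : d ≠ 0) (hn : n ≠ 0)
    (hXZ : X.Coprime Z) (h : X * Z = d * y ^ n) :
    ∃ a b u v, a * b = d ∧ y = u * v ∧ X = a * u ^ n ∧ Z = b * v ^ n := by
  obtain ⟨a, b, ⟨X', rfl⟩, ⟨Z', rfl⟩, rfl⟩ := exists_dvd_and_dvd_of_dvd_mul (Dvd.intro _ h.symm)
  have hpow : X' * Z' = y ^ n := mul_left_cancel₀ hd (by rw [← h]; ac_rfl)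
  have hXZ' : X'.Coprime Z' := hXZ.coprime_mul_left.coprime_mul_left_right
  obtain ⟨u, rfl⟩ := exists_eq_pow_of_mul_eq_pow (Nat.isUnit_iff.2 hXZ') hpow
  obtain ⟨v, rfl⟩ :=
    exists_eq_pow_of_mul_eq_pow (Nat.isUnit_iff.2 hXZ'.symm) ((mul_comm _ _).trans hpow)
  exact ⟨a, b, u, v, rfl, Nat.pow_left_injective hn (by simpa only [mul_pow] using hpow.symm),
    rfl, rfl⟩

theorem exists_eq_mul_sq_of_isCoprime {X Z y : ℤ} {d : ℕ} (hd : d ≠ 0) (hX : 0 ≤ X) (hZ : 0 ≤ Z)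
    (hXZ : IsCoprime X Z) (h : X * Z = d * y ^ 2) :
    ∃ a b : ℕ, ∃ u v : ℤ, a * b = d ∧ y = u * v ∧ X = a * u ^ 2 ∧ Z = b * v ^ 2 := by
  lift X to ℕ using hX
  lift Z to ℕ using hZ
  rw [← Int.natAbs_sq y] at h
  obtain ⟨a, b, u, v, hab, hy, rfl, rfl⟩ := exists_eq_mul_pow_of_coprime hd two_ne_zero
    (Nat.isCoprime_iff_coprime.1 hXZ) (by exact_mod_cast h)
  rcases Int.natAbs_eq y with hy' | hy' <;> rw [hy] at hy'
  · exact ⟨a, b, u, v, hab, by simpa using hy', by simp, by simp⟩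
  · exact ⟨a, b, u, -v, hab, by simpa using hy', by simp, by simp⟩

theorem not_isSquare_mul_add_one_and_sub_one {m x : ℤ} (hm : m ≠ 0) (hx : 1 < x) :
    ¬(IsSquare (m * (x + 1)) ∧ IsSquare (m * (x - 1))) := by
  rintro ⟨hadd, hsub⟩
  obtain ⟨t, ht⟩ := (isSquare_iff_exists_sq _).1 (hadd.mul hsub)
  obtain ⟨n, rfl⟩ : m ∣ t := (Int.pow_dvd_pow_iff two_ne_zero).1 ⟨x ^ 2 - 1, by rw [← ht]; ring⟩
  have hn : x ^ 2 - 1 = |n| ^ 2 := by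
    rw [sq_abs]
    exact mul_left_cancel₀ (pow_ne_zero 2 hm) (by linear_combination ht)
  have hlt : |n| < x := by nlinarith [abs_nonneg n]
  nlinarith [abs_nonneg n]

end CoprimeFactors

section LegendreSymbols

theorem legendreSym_left_eq_of_dvd_right {p : ℕ} [Fact p.Prime] {a b c u v : ℤ}
    (hb : (p : ℤ) ∣ b) (hc : legendreSym p c ≠ 0) (h : a * u ^ 2 - b * v ^ 2 = c) :
    legendreSym p a = legendreSym p c := by
  have hcu : legendreSym p c = legendreSym p a * legendreSym p u ^ 2 := by
    have hb0 : (b : ZMod p) = 0 := (ZMod.intCast_zmod_eq_zero_iff_dvd b p).2 hb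
    rw [pow_two, ← legendreSym.mul, ← legendreSym.mul, ← pow_two, legendreSym, legendreSym, ← h]
    simp [hb0]
  have hu : (u : ZMod p) ≠ 0 := by
    rw [Ne, ← legendreSym.eq_zero_iff]
    rintro hu
    simp [hcu, hu] at hc
  rw [hcu, legendreSym.sq_one p hu, mul_one]

theorem legendreSym_right_eq_of_dvd_left {p : ℕ} [Fact p.Prime] (hp : p % 4 = 1)
    {a b c u v : ℤ} (ha : (p : ℤ) ∣ a) (hc : legendreSym p c ≠ 0)
    (h : a * u ^ 2 - b * v ^ 2 = c) : legendreSym p b = legendreSym p c := by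
  rw [← legendreSym_left_eq_of_dvd_right (a := -b) (b := -a) (u := v) (v := u)
    (dvd_neg.2 ha) hc (by linear_combination h), legendreSym.at_neg (by lia),
    ZMod.χ₄_nat_one_mod_four hp, one_mul]

theorem legendreSym_two_of_mod_eight_eq_five {p : ℕ} [Fact p.Prime] (hp : p % 8 = 5) :
    legendreSym p 2 = -1 := by
  rw [legendreSym.at_two (by lia), ZMod.χ₈_nat_mod_eight, hp]
  rfl

variable {r s : ℕ} [Fact r.Prime] [Fact s.Prime]

theorem mul_sq_sub_mul_sq_ne_of_legendreSym (hr : r % 4 = 1) (hrs : legendreSym s r = 1)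
    (hsr : legendreSym r s = 1) {a b c u v : ℤ} (hab : legendreSym r (a * b) = -1)
    (ha : legendreSym r a = legendreSym s a) (hc : legendreSym r c = legendreSym s c)
    (hc0 : legendreSym r c ≠ 0) : a * r * u ^ 2 - b * s * v ^ 2 ≠ c := by
  intro h
  have has : legendreSym s a = legendreSym s c := by
    simpa only [legendreSym.mul, hrs, mul_one] using
      legendreSym_left_eq_of_dvd_right (dvd_mul_left _ _) (hc ▸ hc0) h
  have hbr : legendreSym r b = legendreSym r c := by
    simpa only [legendreSym.mul, hsr, mul_one] using
      legendreSym_right_eq_of_dvd_left hr (dvd_mul_left _ _) hc0 h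
  rw [legendreSym.mul, ha, has, hbr, ← hc] at hab
  nlinarith [sq_nonneg (legendreSym r c)]

theorem exists_eq_mul_mul_of_mul_sq_sub_mul_sq_eq (hr : r % 4 = 1) (hs : s % 4 = 1)
    (hrs : legendreSym s r = 1) {m a b : ℕ} {c u v : ℤ} (hm : legendreSym r m = -1)
    (hdvd : ∀ n : ℕ, n ∣ m → legendreSym r n = legendreSym s n)
    (hc : legendreSym r c = legendreSym s c) (hc0 : legendreSym r c ≠ 0)
    (hab : a * b = m * r * s) (h : a * u ^ 2 - b * v ^ 2 = c) :
    (∃ n, b = n * r * s ∧ a * n = m ∧ legendreSym r a = legendreSym r c) ∨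
      ∃ n, a = n * r * s ∧ b * n = m ∧ legendreSym r b = legendreSym r c := by
  have hsr : legendreSym r s = 1 :=
    (legendreSym.quadratic_reciprocity_one_mod_four hs (by lia)).trans hrs
  have hr' : Prime r := Nat.prime_iff.1 Fact.out
  have hs' : Prime s := Nat.prime_iff.1 Fact.out
  rcases exists_eq_mul_or_exists_eq_mul_of_prime hs' hab with ⟨a, rfl, hab'⟩ | ⟨b, rfl, hab'⟩ <;>
    rcases exists_eq_mul_or_exists_eq_mul_of_prime hr' hab' with ⟨a, rfl, rfl⟩ | ⟨b, rfl, rfl⟩ <;>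
    push_cast at h
  · exact .inr ⟨a, rfl, mul_comm _ _,
      legendreSym_right_eq_of_dvd_left hr ((dvd_mul_left _ _).mul_right _) hc0 h⟩
  · have hms : legendreSym s (a * b) = -1 := by rw [← hm, hdvd _ dvd_rfl, Nat.cast_mul]
    exact absurd h (mul_sq_sub_mul_sq_ne_of_legendreSym hs hsr hrs hms
      (hdvd a (dvd_mul_right _ _)).symm hc.symm (hc ▸ hc0))
  · exact absurd h (mul_sq_sub_mul_sq_ne_of_legendreSym hr hrs hsr
      (by rw [← hm, Nat.cast_mul]) (hdvd a (dvd_mul_right _ _)) hc hc0)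
  · exact .inl ⟨b, rfl, rfl,
      legendreSym_left_eq_of_dvd_right ((dvd_mul_left _ _).mul_right _) hc0 h⟩

end LegendreSymbols

section PellEquation

/-- A splitting of a solution of `x² - d y² = 1`: `x + 1 = k a u²`, `x - 1 = k b v²`, `y = k u v`
with `a b = d`, from which the norm form equation `a u² - b v² = c` is obtained. In the splittings
constructed below `k` is `gcd (x + 1, x - 1)`, of which only `k c = 2` is recorded. -/
structure IsPellSplitting {d : ℕ} (ε : Solution₁ (d : ℤ)) (k c a b : ℕ) (u v : ℤ) : Prop where
  mul_eq_two : k * c = 2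
  mul_eq : a * b = d
  y_eq : ε.y = k * (u * v)
  x_add_one : ε.x + 1 = k * (a * u ^ 2)
  x_sub_one : ε.x - 1 = k * (b * v ^ 2)

theorem exists_isCoprime_of_sq_sub_mul_sq_eq_one {d x y : ℤ} (hd : ¬4 ∣ d)
    (h : x ^ 2 - d * y ^ 2 = 1) :
    ∃ k c : ℕ, ∃ X Y Z : ℤ, k * c = 2 ∧ (2 ∣ d → k = 2) ∧ IsCoprime X Z ∧ y = k * Y ∧
      x + 1 = k * X ∧ x - 1 = k * Z := by
  rcases Int.even_or_odd' x with ⟨n, rfl | rfl⟩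
  · have hd2 : ¬2 ∣ d := by
      rintro ⟨e, rfl⟩
      have : 2 * (2 * n ^ 2 - e * y ^ 2) = 1 := by linear_combination h
      lia
    exact ⟨1, 2, 2 * n + 1, y, 2 * n - 1, rfl, fun h2 => absurd h2 hd2, ⟨n, -n - 1, by ring⟩,
      by simp, by simp, by simp⟩
  · have hy : Even y := by
      rw [← Int.not_odd_iff_even]
      rintro ⟨m, rfl⟩
      exact hd ⟨n ^ 2 + n - d * (m ^ 2 + m), by linear_combination -h⟩
    obtain ⟨Y, rfl⟩ := hy.two_dvd
    exact ⟨2, 1, n + 1, Y, n, rfl, fun _ => rfl, ⟨1, -1, by ring⟩, by simp, by push_cast; ring,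
      by push_cast; ring⟩

theorem exists_isPellSplitting {d : ℕ} (hd : ¬4 ∣ d) {ε : Solution₁ (d : ℤ)} (hε : 0 < ε.x) :
    ∃ k c a b : ℕ, ∃ u v : ℤ, (2 ∣ d → k = 2) ∧ IsPellSplitting ε k c a b u v := by
  obtain ⟨k, c, X, Y, Z, hkc, hk, hXZ, hy, hX, hZ⟩ :=
    exists_isCoprime_of_sq_sub_mul_sq_eq_one (by exact_mod_cast hd) ε.prop
  have hk0 : (0 : ℤ) < k := by exact_mod_cast Nat.pos_of_mul_pos_right (hkc ▸ two_pos)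
  have hXY : X * Z = d * Y ^ 2 := by
    refine mul_left_cancel₀ (pow_ne_zero 2 hk0.ne') ?_
    calc (k : ℤ) ^ 2 * (X * Z) = (ε.x + 1) * (ε.x - 1) := by rw [hX, hZ]; ring
      _ = d * ε.y ^ 2 := by linear_combination ε.prop
      _ = (k : ℤ) ^ 2 * (d * Y ^ 2) := by rw [hy]; ring
  have hd0 : d ≠ 0 := by rintro rfl; simp at hd
  obtain ⟨a, b, u, v, hab, hYuv, hXu, hZv⟩ :=
    exists_eq_mul_sq_of_isCoprime hd0 (by nlinarith) (by nlinarith) hXZ hXY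
  exact ⟨k, c, a, b, u, v, by exact_mod_cast hk, hkc, hab, hYuv ▸ hy, hXu ▸ hX, hZv ▸ hZ⟩

namespace IsPellSplitting

variable {d k c a b : ℕ} {ε : Solution₁ (d : ℤ)} {u v : ℤ}

theorem mul_sq_sub_mul_sq (h : IsPellSplitting ε k c a b u v) :
    a * u ^ 2 - b * v ^ 2 = (c : ℤ) := by
  have hk : (k : ℤ) * c = 2 := by exact_mod_cast h.mul_eq_two
  have hk0 : (k : ℤ) ≠ 0 := left_ne_zero_of_mul (hk ▸ two_ne_zero)
  exact mul_left_cancel₀ hk0 (by linear_combination h.x_sub_one - h.x_add_one - hk)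

theorem isSquare (h : IsPellSplitting ε 2 c 1 b u v) : IsSquare ε := by
  have hc : c = 1 := by have := h.mul_eq_two; lia
  have hb : b = d := by simpa using h.mul_eq
  have huv := h.mul_sq_sub_mul_sq
  have hx := h.x_add_one
  have hy := h.y_eq
  push_cast [hb, hc, one_mul] at huv hx hy
  refine ⟨.mk u v huv, Solution₁.ext ?_ ?_⟩
  · simp only [Solution₁.x_mul, Solution₁.x_mk, Solution₁.y_mk]
    linear_combination hx + huv
  · simp only [Solution₁.y_mul, Solution₁.x_mk, Solution₁.y_mk]
    linear_combination hy

theorem right_ne_one {q : ℕ} [Fact q.Prime] (hq : q % 4 = 3) (hqd : q ∣ d)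
    (h : IsPellSplitting ε 2 c a b u v) : b ≠ 1 := by
  rintro rfl
  have hc : c = 1 := by have := h.mul_eq_two; lia
  have ha : (a : ZMod q) = 0 :=
    (ZMod.natCast_eq_zero_iff _ _).2 (by rwa [← h.mul_eq, mul_one] at hqd)
  have huv := congrArg (Int.cast : ℤ → ZMod q) h.mul_sq_sub_mul_sq
  refine ZMod.mod_four_ne_three_of_sq_eq_neg_one (p := q) (y := v) ?_ hq
  push_cast [ha, hc] at huv
  linear_combination -huv

end IsPellSplitting

theorem not_isSquare_of_isFundamental {d : ℤ} {ε : Solution₁ d} (hε : IsFundamental ε) :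
    ¬IsSquare ε := by
  rintro ⟨δ, hδ⟩
  obtain ⟨n, hn⟩ : ∃ n : ℤ, ε = ε ^ n * ε ^ n := by
    obtain ⟨n, rfl | rfl⟩ := hε.eq_zpow_or_neg_zpow δ
    · exact ⟨n, hδ⟩
    · exact ⟨n, by rwa [neg_mul_neg] at hδ⟩
  have h1 : ε ^ (n + n - 1) = 1 := by rw [zpow_sub_one, zpow_add, ← hn, mul_inv_cancel]
  have := (hε.zpow_eq_one_iff _).1 h1
  lia

theorem isFundamental_mk {d x y : ℤ} (hd : 0 < d) (hx : 0 < x) (hy : 0 < y)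
    (h : x ^ 2 - d * y ^ 2 = 1)
    (hmin : ∀ a b : ℤ, 0 < a → 0 < b → a ^ 2 - d * b ^ 2 = 1 → x ≤ a) :
    IsFundamental (Solution₁.mk x y h) := by
  have hx1 : 1 < x := by nlinarith [mul_pos hd (pow_pos hy 2)]
  refine ⟨hx1, hy, fun {δ} hδ => hmin δ.x |δ.y| (by lia) ?_ ?_⟩
  · exact abs_pos.2 (Solution₁.y_ne_zero_of_one_lt_x hδ)
  · rw [sq_abs, δ.prop]

end PellEquation

section PrimeFactors

variable {ρ q r s : ℕ}

theorem eq_of_dvd_mul_prime (hρ : ρ = 1 ∨ ρ = 2) (hq : q.Prime) {n : ℕ} (hn : n ∣ ρ * q) :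
    n = 1 ∨ n = 2 ∨ n = q ∨ n = 2 * q := by
  obtain ⟨i, j, hi, hj, rfl⟩ := Nat.dvd_mul.1 hn
  have hi2 : i ∣ 2 := hi.trans (by rcases hρ with rfl | rfl <;> simp)
  rcases (Nat.dvd_prime Nat.prime_two).1 hi2 with rfl | rfl <;>
    rcases (Nat.dvd_prime hq).1 hj with rfl | rfl <;> simp

variable [Fact r.Prime] [Fact s.Prime]

theorem legendreSym_eq_legendreSym_of_dvd_mul_prime (hρ : ρ = 1 ∨ ρ = 2) (hq : q.Prime)
    (h2r : legendreSym r 2 = -1) (h2s : legendreSym s 2 = -1)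
    (hr : legendreSym r (ρ * q) = -1) (hs : legendreSym s (ρ * q) = -1) {n : ℕ} (hn : n ∣ ρ * q) :
    legendreSym r n = legendreSym s n := by
  have hqrs : legendreSym r q = legendreSym s q := by
    rcases hρ with rfl | rfl <;> simp_all [legendreSym.mul]
  rcases eq_of_dvd_mul_prime hρ hq hn with rfl | rfl | rfl | rfl <;>
    simp [legendreSym.mul, h2r, h2s, hqrs]

theorem eq_prime_of_legendreSym_eq (hρ : ρ = 1 ∨ ρ = 2) (hq : q.Prime)
    (h2 : legendreSym r 2 = -1) (hr : legendreSym r (ρ * q) = -1) {k c a n : ℕ} (hkc : k * c = 2)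
    (hk : ρ = 2 → k = 2) (ha : k = 2 → a ≠ 1) (han : a * n = ρ * q)
    (hac : legendreSym r a = legendreSym r c) : a = q ∧ n = ρ ∧ k = ρ := by
  have haq : a = q ∧ k = ρ := by
    have hc : c = 1 ∨ c = 2 := (Nat.dvd_prime Nat.prime_two).1 (Dvd.intro_left _ hkc)
    have ha_dvd : a ∣ ρ * q := Dvd.intro _ han
    rcases hρ with rfl | rfl
    · rw [one_mul, Nat.dvd_prime hq] at ha_dvd
      rcases hc with rfl | rfl <;> rcases ha_dvd with rfl | rfl <;> simp_all
    · obtain rfl : k = 2 := hk rfl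
      obtain rfl : c = 1 := by lia
      rcases eq_of_dvd_mul_prime (.inr rfl) hq ha_dvd with rfl | rfl | rfl | rfl <;> simp_all
  obtain ⟨rfl, rfl⟩ := haq
  exact ⟨rfl, Nat.eq_of_mul_eq_mul_left hq.pos (by rw [han, mul_comm]), rfl⟩

theorem exists_eq_mul_sq_of_not_isSquare (hρ : ρ = 1 ∨ ρ = 2) [Fact q.Prime] (hq : q % 4 = 3)
    (hr8 : r % 8 = 5) (hs8 : s % 8 = 5) (hr : legendreSym r (ρ * q) = -1)
    (hs : legendreSym s (ρ * q) = -1) (hrs : legendreSym s r = 1)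
    {ε : Solution₁ ((ρ * q * r * s : ℕ) : ℤ)} (hε : 0 < ε.x) (hsq : ¬IsSquare ε) :
    ∃ y₁ y₂ : ℤ, ε.y = y₁ * y₂ ∧
      (ε.x + 1 = ρ * q * y₁ ^ 2 ∧ ε.x - 1 = r * s * y₂ ^ 2 ∨
        ε.x - 1 = ρ * q * y₁ ^ 2 ∧ ε.x + 1 = r * s * y₂ ^ 2) := by
  have h2r := legendreSym_two_of_mod_eight_eq_five hr8
  have h2s := legendreSym_two_of_mod_eight_eq_five hs8
  have hq' : q.Prime := Fact.out
  have hd : ¬4 ∣ ρ * q * r * s := by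
    have hodd : Odd (q * r * s) :=
      ((Nat.odd_iff.2 (by lia)).mul (Nat.odd_iff.2 (by lia))).mul (Nat.odd_iff.2 (by lia))
    obtain ⟨n, hn⟩ := hodd
    rw [mul_assoc ρ, mul_assoc ρ, hn]
    lia
  obtain ⟨k, c, a, b, u, v, hk, h⟩ := exists_isPellSplitting hd hε
  have hkρ : ρ = 2 → k = 2 := by rintro rfl; exact hk ⟨q * r * s, by ring⟩
  have hc : legendreSym r c = legendreSym s c ∧ legendreSym r c ≠ 0 := by
    have hc2 := (Nat.dvd_prime Nat.prime_two).1 (Dvd.intro_left _ h.mul_eq_two)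
    rcases hc2 with rfl | rfl <;> simp [h2r, h2s]
  rcases exists_eq_mul_mul_of_mul_sq_sub_mul_sq_eq (by lia) (by lia) hrs (by exact_mod_cast hr)
    (fun _ => legendreSym_eq_legendreSym_of_dvd_mul_prime hρ hq' h2r h2s hr hs) hc.1 hc.2 h.mul_eq
    h.mul_sq_sub_mul_sq with ⟨n, rfl, han, hac⟩ | ⟨n, rfl, hbn, hbc⟩
  · have ha : k = 2 → a ≠ 1 := by rintro rfl rfl; exact hsq h.isSquare
    obtain ⟨rfl, rfl, rfl⟩ := eq_prime_of_legendreSym_eq hρ hq' h2r hr h.mul_eq_two hkρ ha han hac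
    refine ⟨u, k * v, by rw [h.y_eq]; ring, .inl ⟨by rw [h.x_add_one]; ring, ?_⟩⟩
    rw [h.x_sub_one]; push_cast; ring
  · have hb : k = 2 → b ≠ 1 := by
      rintro rfl
      exact h.right_ne_one hq ⟨ρ * r * s, by ring⟩
    obtain ⟨rfl, rfl, rfl⟩ := eq_prime_of_legendreSym_eq hρ hq' h2r hr h.mul_eq_two hkρ hb hbn hbc
    refine ⟨v, k * u, by rw [h.y_eq]; ring, .inr ⟨by rw [h.x_sub_one]; ring, ?_⟩⟩
    rw [h.x_add_one]; push_cast; ring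

theorem legendreSym_mul_eq_neg_one {η : ℕ} (hηρ : (η = 1 ∧ ρ = 2) ∨ (η = 2 ∧ ρ = 1))
    (hr8 : r % 8 = 5) (hqr : legendreSym r q = (-1) ^ (if η = 2 then 1 else 0)) :
    legendreSym r (ρ * q) = -1 := by
  rcases hηρ with ⟨rfl, rfl⟩ | ⟨rfl, rfl⟩ <;>
    simp [legendreSym.mul, legendreSym_two_of_mod_eight_eq_five hr8, hqr]

end PrimeFactors

theorem statement_7_general {ρ q r s : ℕ} [Fact q.Prime] [Fact r.Prime] [Fact s.Prime]
    (hρ : ρ = 1 ∨ ρ = 2) (hq4 : q % 4 = 3) (hr8 : r % 8 = 5) (hs8 : s % 8 = 5)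
    (hr : legendreSym r (ρ * q) = -1) (hs : legendreSym s (ρ * q) = -1)
    (hrs : legendreSym s r = 1) {ε : Solution₁ ((ρ * q * r * s : ℕ) : ℤ)} (hε : 0 < ε.x)
    (hsq : ¬IsSquare ε) :
    Xor (IsSquare (ρ * q * (ε.x + 1))) (IsSquare (ρ * q * (ε.x - 1))) ∧
      ∃ y₁ y₂ : ℤ, ε.y = y₁ * y₂ ∧ 2 * ε.x = ρ * q * y₁ ^ 2 + r * s * y₂ ^ 2 ∧
        (IsSquare (ρ * q * (ε.x + 1)) → 2 = ρ * q * y₁ ^ 2 - r * s * y₂ ^ 2) ∧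
        (IsSquare (ρ * q * (ε.x - 1)) → 2 = -(ρ * q * y₁ ^ 2) + r * s * y₂ ^ 2) := by
  have hm : (ρ * q : ℤ) ≠ 0 := by
    obtain ⟨_, _⟩ : 0 < ρ ∧ 0 < q := by lia
    positivity
  have hx : 1 < ε.x := by
    refine lt_of_le_of_ne hε fun hx1 => hsq ?_
    obtain ⟨_, _, _, _⟩ : 0 < ρ ∧ 0 < q ∧ 0 < r ∧ 0 < s := by lia
    rw [Solution₁.eq_one_of_x_eq_one (by positivity) hx1.symm]
    exact IsSquare.one
  have hAB := not_isSquare_mul_add_one_and_sub_one hm hx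
  obtain ⟨y₁, y₂, hy, ⟨hadd, hsub⟩ | ⟨hsub, hadd⟩⟩ :=
    exists_eq_mul_sq_of_not_isSquare hρ hq4 hr8 hs8 hr hs hrs hε hsq
  · have hA : IsSquare (ρ * q * (ε.x + 1)) := ⟨ρ * q * y₁, by rw [hadd]; ring⟩
    have hB : ¬IsSquare (ρ * q * (ε.x - 1)) := fun hB => hAB ⟨hA, hB⟩
    exact ⟨.inl ⟨hA, hB⟩, y₁, y₂, hy, by linarith, fun _ => by linarith, fun h => absurd h hB⟩
  · have hB : IsSquare (ρ * q * (ε.x - 1)) := ⟨ρ * q * y₁, by rw [hsub]; ring⟩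
    have hA : ¬IsSquare (ρ * q * (ε.x + 1)) := fun hA => hAB ⟨hA, hB⟩
    exact ⟨.inr ⟨hB, hA⟩, y₁, y₂, hy, by linarith, fun h => absurd h hA, fun _ => by linarith⟩

theorem statement_7 (η ρ q r s : ℕ) [Fact q.Prime] [Fact r.Prime] [Fact s.Prime]
    (hηρ : (η = 1 ∧ ρ = 2) ∨ (η = 2 ∧ ρ = 1))
    (hq4 : q % 4 = 3) (hr8 : r % 8 = 5) (hs8 : s % 8 = 5)
    (hqr : legendreSym r q = (-1) ^ (if η = 2 then 1 else 0))
    (hqs : legendreSym s q = (-1) ^ (if η = 2 then 1 else 0))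
    (hrs : legendreSym s r = 1)
    (x y : ℤ) (hx : 0 < x) (hy : 0 < y)
    (hPell : x ^ 2 - (ρ * q * r * s : ℕ) * y ^ 2 = 1)
    (hfund : ∀ a b : ℤ, 0 < a → 0 < b → a ^ 2 - (ρ * q * r * s : ℕ) * b ^ 2 = 1 → x ≤ a) :
    let A : Prop := ∃ t : ℤ, 2 ^ (if ρ = 2 then 1 else 0) * (q : ℤ) * (x + 1) = t ^ 2
    let B : Prop := ∃ t : ℤ, 2 ^ (if ρ = 2 then 1 else 0) * (q : ℤ) * (x - 1) = t ^ 2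
    Xor' A B ∧
      ∃ y₁ y₂ : ℤ, y = y₁ * y₂ ∧
        2 * x = (ρ : ℤ) * q * y₁ ^ 2 + (r : ℤ) * s * y₂ ^ 2 ∧
        (A → (2 : ℤ) = (ρ : ℤ) * q * y₁ ^ 2 - (r : ℤ) * s * y₂ ^ 2) ∧
        (B → (2 : ℤ) = -((ρ : ℤ) * q * y₁ ^ 2) + (r : ℤ) * s * y₂ ^ 2) := by
  have hρ : ρ = 1 ∨ ρ = 2 := by lia
  have hpow : (2 : ℤ) ^ (if ρ = 2 then 1 else 0) = ρ := by rcases hρ with rfl | rfl <;> rfl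
  have hd : (0 : ℤ) < (ρ * q * r * s : ℕ) := by
    obtain ⟨_, _, _, _⟩ : 0 < ρ ∧ 0 < q ∧ 0 < r ∧ 0 < s := by lia
    positivity
  simp only [hpow, ← isSquare_iff_exists_sq]
  exact statement_7_general hρ hq4 hr8 hs8 (legendreSym_mul_eq_neg_one hηρ hr8 hqr)
    (legendreSym_mul_eq_neg_one hηρ hs8 hqs) hrs
    (ε := .mk x y hPell) hx (not_isSquare_of_isFundamental (isFundamental_mk hd hx hy hPell hfund))
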